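/- Let X be a finite nonempty set and let π ∈ Π_l(X) be a labelled set partition having at least one labelled block and at least one unlabelled block. Then μ_{Π_l(X)}(π, 1̂_l) = 0, where 1̂_l is the maximum of Π_l(X), the single labelled block X∪{l}. -/

import Mathlib

open scoped Classical

noncomputable section

/-! ## Labelled set partitions -/

/-- A labelled set partition of a finite set `α`: a set partition of `α` (encoded as the
equivalence relation `rel` whose classes are the blocks) in which each block either carries
the label `l` or not (a point `x` lies in `lab` iff the block of `x` is labelled). -/
@[ext]
structure LPart (α : Type*) where
  rel : Setoid α
  lab : Set α
  lab_mem : ∀ ⦃x y : α⦄, rel x y → (x ∈ lab ↔ y ∈ lab)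

namespace LPart

variable {α : Type*}

/-- `σ ≤ π` iff every block of `σ` (together with its label) is contained in a block of `π`. -/
instance : PartialOrder (LPart α) where
  le σ π := σ.rel ≤ π.rel ∧ σ.lab ⊆ π.lab
  le_refl σ := ⟨le_rfl, subset_rfl⟩
  le_trans _ _ _ h h' := ⟨h.1.trans h'.1, h.2.trans h'.2⟩
  le_antisymm σ π h h' := LPart.ext (le_antisymm h.1 h'.1) (le_antisymm h.2 h'.2)

/-- The join (smallest common coarsening) of two labelled set partitions: the join of the
underlying partitions, a block being labelled iff it contains a labelled block of one of the
two partitions. -/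
def sup (σ π : LPart α) : LPart α where
  rel := σ.rel ⊔ π.rel
  lab := {x | ∃ y, (σ.rel ⊔ π.rel) x y ∧ (y ∈ σ.lab ∨ y ∈ π.lab)}
  lab_mem := by
    intro x y h
    constructor
    · rintro ⟨z, hz, hl⟩
      exact ⟨z, (σ.rel ⊔ π.rel).iseqv.trans ((σ.rel ⊔ π.rel).iseqv.symm h) hz, hl⟩
    · rintro ⟨z, hz, hl⟩
      exact ⟨z, (σ.rel ⊔ π.rel).iseqv.trans h hz, hl⟩

instance _root_.Setoid.finite [Finite α] : Finite (Setoid α) :=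
  Finite.of_injective (fun s : Setoid α => ⇑s) fun _ _ h => Setoid.eq_iff_rel_eq.2 h

instance [Finite α] : Finite (LPart α) :=
  Finite.of_injective (fun π : LPart α => (π.rel, π.lab))
    (fun a b h => by
      cases a; cases b
      simpa [LPart.mk.injEq] using h)

instance fintype [Finite α] : Fintype (LPart α) := Fintype.ofFinite _

/-- `π` has exactly one labelled block. -/
def OneLab (π : LPart α) : Prop :=
  π.lab.Nonempty ∧ ∀ x ∈ π.lab, ∀ y ∈ π.lab, π.rel x y

/-- The indicator `m(π)` that `π` has exactly one labelled block. -/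
def m (π : LPart α) : ℝ := if π.OneLab then 1 else 0

/-- The labelled set partition `π_X` into singleton blocks, the singleton `{x}` being
labelled iff `x ∈ K`. -/
def piX (K : Set α) : LPart α :=
  ⟨⊥, K, fun x y h => by
    have : x = y := by
      have := Setoid.bot_def (α := α)
      exact congrFun (congrFun this x) y ▸ h
    rw [this]⟩

end LPart

/-- The Möbius function of a finite poset (the unique `μ` with `μ ⋆ ζ = δ`),
evaluated at a pair of elements. -/
def mobius {P : Type*} [Fintype P] [PartialOrder P] (x y : P) : ℝ :=
  letI : LocallyFiniteOrder P := Fintype.toLocallyFiniteOrder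
  IncidenceAlgebra.mu ℝ x y

/-- The state set `Π_l(X, π_X)`: all labelled set partitions `π ≥ π_X` having at least one
labelled block. -/
abbrev LStates (α : Type*) (K : Set α) : Type _ :=
  {π : LPart α // LPart.piX K ≤ π ∧ π.lab.Nonempty}

noncomputable instance {α : Type*} [Finite α] (K : Set α) : Fintype (LStates α K) :=
  Fintype.ofFinite _

/-- `λ(π) = ∑_{σ ∈ Π_l(X,π_X), σ ≥ π} μ_{Π_l(X)}(π, σ) m(σ)`. -/
def lamda {α : Type*} [Finite α] (K : Set α) (π : LPart α) : ℝ :=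
  letI : Fintype (LPart α) := LPart.fintype
  ∑ σ : LStates α K, if π ≤ σ.1 then mobius π σ.1 * LPart.m σ.1 else 0

/-- The maximum `1̂_l` of `Π_l(X)`: the single labelled block `X ∪ {l}`. -/
def LPart.topL (α : Type*) : LPart α := ⟨⊤, Set.univ, fun _ _ _ => Iff.rfl⟩

/-! For `x` not closed under a closure operator `c`, the values `μ(x, z)` over the `z ≥ x` with
closure `y` sum to `0` (Rota). Labelling every block is a closure operator on `Π_l(X)` under which
a partition with an unlabelled block is not closed, and the only elements with closure `1̂_l` are
`1̂_l` itself and the single unlabelled block `X`. The latter does not lie above a partition with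
a labelled block, so the sum for `x = π`, `y = 1̂_l` consists of the single term `μ(π, 1̂_l)`. -/

section Closure

open Finset IncidenceAlgebra

variable {P : Type*} [PartialOrder P] [LocallyFiniteOrder P] [DecidableEq P]

theorem filter_Icc_closure_eq_of_le (c : ClosureOperator P) (x : P) {w y : P} (hwy : w ≤ y) :
    {z ∈ Icc x y | c z = w} = {z ∈ Icc x w | c z = w} := by
  ext z
  simp only [mem_filter, mem_Icc, and_congr_left_iff, and_congr_right_iff]
  rintro rfl -
  exact iff_of_true ((c.le_closure z).trans hwy) (c.le_closure z)

theorem sum_mu_filter_closure_eq_zero {𝕜 : Type*} [AddCommGroup 𝕜] [One 𝕜]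
    (c : ClosureOperator P) {x : P} (hx : ¬ c.IsClosed x) (y : P) :
    ∑ z ∈ Icc x y with c z = y, mu 𝕜 x z = 0 := by
  induction hn : #(Icc x y) using Nat.strong_induction_on generalizing y with
  | _ n ih =>
  subst hn
  by_cases hy : c.IsClosed y
  · have hxy : x ≠ y := by
      rintro rfl
      exact hx hy
    have closure_mem : ∀ z ∈ Icc x y, c z ∈ Icc x y := fun z hz ↦
      mem_Icc.2 ⟨(mem_Icc.1 hz).1.trans (c.le_closure z), c.closure_min (mem_Icc.1 hz).2 hy⟩
    have fiber_eq_zero : ∀ w ∈ Icc x y, w ≠ y →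
        ∑ z ∈ Icc x y with c z = w, mu 𝕜 x z = 0 := by
      intro w hw hwy
      obtain ⟨hxw, hwy'⟩ := mem_Icc.1 hw
      rw [filter_Icc_closure_eq_of_le c x hwy']
      have hlt : w < y := hwy'.lt_of_ne hwy
      exact ih _ (card_lt_card (Icc_ssubset_Icc_right (hxw.trans hwy') le_rfl hlt)) w rfl
    calc ∑ z ∈ Icc x y with c z = y, mu 𝕜 x z
        = ∑ w ∈ Icc x y, ∑ z ∈ Icc x y with c z = w, mu 𝕜 x z := by
          refine (sum_eq_single y fiber_eq_zero fun hy' ↦ ?_).symm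
          rw [Icc_eq_empty fun h ↦ hy' (right_mem_Icc.2 h), filter_empty, sum_empty]
      _ = ∑ z ∈ Icc x y, mu 𝕜 x z := sum_fiberwise_of_maps_to closure_mem _
      _ = 0 := by rw [sum_Icc_mu_right, if_neg hxy]
  · have fiber_empty : {z ∈ Icc x y | c z = y} = ∅ :=
      filter_false_of_mem fun z _ (hz : c z = y) ↦ hy (hz ▸ c.isClosed_closure z)
    rw [fiber_empty, sum_empty]

end Closure

namespace LPart

variable {α : Type*}

/-- The closure operator on labelled set partitions that labels every block; its closed elements
form a copy of the lattice of ordinary set partitions of `α`. -/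
def labelAll : ClosureOperator (LPart α) :=
  ClosureOperator.ofPred (fun π ↦ ⟨π.rel, Set.univ, fun _ _ _ ↦ Iff.rfl⟩)
    (fun π ↦ π.lab = Set.univ) (fun π ↦ ⟨le_rfl, Set.subset_univ π.lab⟩) (fun _ ↦ rfl)
    (fun _ _ h hlab ↦ ⟨h.1, hlab.ge⟩)

theorem isClosed_labelAll_iff {π : LPart α} : labelAll.IsClosed π ↔ π.lab = Set.univ :=
  Iff.rfl

theorem le_topL (π : LPart α) : π ≤ topL α :=
  ⟨le_top, Set.subset_univ π.lab⟩

theorem labelAll_eq_topL_iff {π : LPart α} : labelAll π = topL α ↔ π.rel = ⊤ :=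
  ⟨fun h ↦ congrArg rel h, fun h ↦ LPart.ext h rfl⟩

theorem eq_topL_of_rel_eq_top {π : LPart α} (hrel : π.rel = ⊤) (hlab : π.lab.Nonempty) :
    π = topL α := by
  obtain ⟨a, ha⟩ := hlab
  refine LPart.ext hrel (Set.eq_univ_of_forall fun x ↦ (π.lab_mem ?_).1 ha)
  rw [hrel]
  trivial

theorem filter_labelAll_eq_topL [LocallyFiniteOrder (LPart α)] {π : LPart α}
    (hlab : π.lab.Nonempty) :
    {σ ∈ Finset.Icc π (topL α) | labelAll σ = topL α} = {topL α} := by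
  ext σ
  simp only [Finset.mem_filter, Finset.mem_Icc, labelAll_eq_topL_iff, Finset.mem_singleton]
  constructor
  · rintro ⟨⟨hπσ, -⟩, hrel⟩
    exact eq_topL_of_rel_eq_top hrel (hlab.mono hπσ.2)
  · rintro rfl
    exact ⟨⟨le_topL π, le_rfl⟩, rfl⟩

end LPart

/-- If a labelled set partition `π` of a finite nonempty set has at least one labelled
block and at least one unlabelled block, then `μ_{Π_l(X)}(π, 1̂_l) = 0`. -/
theorem mobius_eq_zero_of_mixed_blocks {α : Type*} [Fintype α] [Nonempty α]
    (π : LPart α) (h1 : π.lab.Nonempty) (h2 : ∃ x, x ∉ π.lab) :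
    mobius π (LPart.topL α) = 0 := by
  let : LocallyFiniteOrder (LPart α) := Fintype.toLocallyFiniteOrder
  have not_closed : ¬ LPart.labelAll.IsClosed π := by
    rwa [LPart.isClosed_labelAll_iff, Set.eq_univ_iff_forall, not_forall]
  have fiber_sum := sum_mu_filter_closure_eq_zero (𝕜 := ℝ) LPart.labelAll not_closed (LPart.topL α)
  rwa [LPart.filter_labelAll_eq_topL h1, Finset.sum_singleton] at fiber_sum

end
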